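/- Let n ≥ 1, 0 ≤ δ ≤ 1, 0 ≤ ρ < 1, m₀ ∈ ℝ, and let N₁, N₂ be natural numbers. Let a : ℝⁿ × ℝⁿ → ℂ be smooth, ℤⁿ-periodic in its first variable, and satisfy |∂_ξ^α ∂_x^β a(x,ξ)| ≤ C_{α,β} ⟨ξ⟩^{m₀ − ρ|α| + δ|β|} for all x, ξ and all multi-indices α, β with |α| ≤ N₁, |β| ≤ N₂, where ⟨ξ⟩ = 1 + |ξ|. Then there exist constants C'_{α,β} such that the restriction ã of a to ℝⁿ × ℤⁿ satisfies |Δ_ξ^α ∂_x^β ã(x,ξ)| ≤ C'_{α,β} ⟨ξ⟩^{m₀ − ρ|α| + δ|β|} for all x ∈ ℝⁿ, ξ ∈ ℤⁿ and all multi-indices α, β with |α| ≤ N₁, |β| ≤ N₂. -/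

import Mathlib

/-!
The difference operators extend to functions on `ℝⁿ × ℝⁿ` as `diffR i g p = g (p + (0, eᵢ)) - g p`.
By the mean value inequality `|diffR i h (p)|` is at most the supremum of `|∂_{ξ_i} h|` over the
segment from `p` to `p + (0, eᵢ)`. Since `diffR i` is built from translations, it commutes with
every `diffR j` and, on differentiable functions, with every `∂_{ξ_j}`. Peeling off one difference
at a time therefore bounds `|Δ_ξ^α g (ξ)|` by the supremum of `|∂_ξ^α g|` over the cube
`ξ + [0, |α|]ⁿ` (`norm_foldr_diffR_le`), and no symmetry of mixed derivatives is needed.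
On that cube the weight `⟨y⟩^s` is at most a constant times `⟨ξ⟩^s`, whatever the sign of `s`, by
Peetre's inequality (`weight_le`); applying this to `g = ∂_x^β a` gives the theorem.
-/

open MeasureTheory Real

/-- Iterated application of a family of operators according to a multi-index:
`multiOp op α = (op 1)^{α 1} ∘ ⋯ ∘ (op n)^{α n}`. -/
def multiOp {n : ℕ} {F : Type*} (op : Fin n → F → F) (α : Fin n → ℕ) : F → F :=
  (List.ofFn fun i => (op i)^[α i]).foldr (· ∘ ·) id

/-- Partial derivative in the `i`-th coordinate of the first (x) variable. -/
noncomputable def pdX {n : ℕ} (i : Fin n)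
    (g : (Fin n → ℝ) × (Fin n → ℝ) → ℂ) : (Fin n → ℝ) × (Fin n → ℝ) → ℂ :=
  fun p => deriv (fun t => g (Function.update p.1 i t, p.2)) (p.1 i)

/-- Partial derivative in the `i`-th coordinate of the second (ξ) variable. -/
noncomputable def pdXi {n : ℕ} (i : Fin n)
    (g : (Fin n → ℝ) × (Fin n → ℝ) → ℂ) : (Fin n → ℝ) × (Fin n → ℝ) → ℂ :=
  fun p => deriv (fun t => g (p.1, Function.update p.2 i t)) (p.2 i)

/-- Partial difference operator in the `i`-th coordinate of a function on `ℤⁿ`: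
`Δ_{ξ_i} g (ξ) = g(ξ + e_i) - g(ξ)`. -/
def diffOp {n : ℕ} (i : Fin n) (g : (Fin n → ℤ) → ℂ) : (Fin n → ℤ) → ℂ :=
  fun ξ => g (Function.update ξ i (ξ i + 1)) - g ξ

/-! ### Multi-index operators as words -/

/-- The word in the indices `0, …, n - 1` in which each `i` occurs `α i` times, in increasing
order. -/
def indexWord {n : ℕ} (α : Fin n → ℕ) : List (Fin n) :=
  (List.ofFn fun i => List.replicate (α i) i).flatten

lemma multiOp_eq_foldr {n : ℕ} {F : Type*} (op : Fin n → F → F) (α : Fin n → ℕ) (g : F) :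
    multiOp op α g = (indexWord α).foldr op g := by
  have key : ∀ l : List (Fin n),
      ((l.map fun i => (op i)^[α i]).foldr (· ∘ ·) id) g =
        ((l.map fun i => List.replicate (α i) i).flatten).foldr op g := by
    intro l
    induction l with
    | nil => rfl
    | cons i l ih =>
      have hrep : ∀ (k : ℕ) (h : F), (op i)^[k] h = (List.replicate k i).foldr op h := by
        intro k h
        induction k with
        | zero => rfl
        | succ k ihk => rw [Function.iterate_succ_apply', ihk]; rfl
      simp only [List.map_cons, List.foldr_cons, List.flatten_cons, List.foldr_append,
        Function.comp_apply, ih, hrep]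
  have h := key (List.finRange n)
  simpa only [multiOp, indexWord, List.ofFn_eq_map] using h

lemma length_indexWord {n : ℕ} (α : Fin n → ℕ) : (indexWord α).length = ∑ i, α i := by
  simp [indexWord, List.length_flatten, List.map_ofFn, List.sum_ofFn, Function.comp_def]

/-! ### Derivatives and differences of smooth functions -/

/-- The difference operator in the `i`-th coordinate of `ξ`, acting on functions of real `(x, ξ)`. -/
def diffR {n : ℕ} (i : Fin n)
    (g : (Fin n → ℝ) × (Fin n → ℝ) → ℂ) : (Fin n → ℝ) × (Fin n → ℝ) → ℂ :=
  fun p => g (p + (0, Pi.single i 1)) - g p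

lemma pdX_eq {n : ℕ} (i : Fin n) {g : (Fin n → ℝ) × (Fin n → ℝ) → ℂ}
    (hg : Differentiable ℝ g) : pdX i g = fun p => fderiv ℝ g p (Pi.single i 1, 0) := by
  funext p
  have h1 : HasDerivAt (fun t => (Function.update p.1 i t, p.2))
      ((Pi.single i 1, 0) : (Fin n → ℝ) × (Fin n → ℝ)) (p.1 i) :=
    (hasDerivAt_update p.1 i (p.1 i)).prodMk (hasDerivAt_const _ _)
  have h2 : HasFDerivAt g (fderiv ℝ g p) (Function.update p.1 i (p.1 i), p.2) := by
    simpa using (hg p).hasFDerivAt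
  exact (h2.comp_hasDerivAt _ h1).deriv

lemma hasDerivAt_xi {n : ℕ} (i : Fin n) {g : (Fin n → ℝ) × (Fin n → ℝ) → ℂ}
    (hg : Differentiable ℝ g) (p : (Fin n → ℝ) × (Fin n → ℝ)) (t : ℝ) :
    HasDerivAt (fun t => g (p.1, Function.update p.2 i t))
      (fderiv ℝ g (p.1, Function.update p.2 i t) (0, Pi.single i 1)) t := by
  have h1 : HasDerivAt (fun t => (p.1, Function.update p.2 i t))
      ((0, Pi.single i 1) : (Fin n → ℝ) × (Fin n → ℝ)) t :=
    (hasDerivAt_const _ _).prodMk (hasDerivAt_update p.2 i t)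
  exact (hg _).hasFDerivAt.comp_hasDerivAt t h1

lemma pdXi_eq {n : ℕ} (i : Fin n) {g : (Fin n → ℝ) × (Fin n → ℝ) → ℂ}
    (hg : Differentiable ℝ g) : pdXi i g = fun p => fderiv ℝ g p (0, Pi.single i 1) := by
  funext p
  have h := (hasDerivAt_xi i hg p (p.2 i)).deriv
  simpa [pdXi] using h

lemma contDiff_pdX {n : ℕ} (i : Fin n) {g : (Fin n → ℝ) × (Fin n → ℝ) → ℂ}
    (hg : ContDiff ℝ (⊤ : ℕ∞) g) : ContDiff ℝ (⊤ : ℕ∞) (pdX i g) := by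
  rw [pdX_eq i (hg.differentiable (by simp))]
  exact (hg.fderiv_right (by simp)).clm_apply contDiff_const

lemma contDiff_pdXi {n : ℕ} (i : Fin n) {g : (Fin n → ℝ) × (Fin n → ℝ) → ℂ}
    (hg : ContDiff ℝ (⊤ : ℕ∞) g) : ContDiff ℝ (⊤ : ℕ∞) (pdXi i g) := by
  rw [pdXi_eq i (hg.differentiable (by simp))]
  exact (hg.fderiv_right (by simp)).clm_apply contDiff_const

lemma contDiff_foldr {n : ℕ}
    {op : Fin n → ((Fin n → ℝ) × (Fin n → ℝ) → ℂ) → ((Fin n → ℝ) × (Fin n → ℝ) → ℂ)}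
    (hop : ∀ i g, ContDiff ℝ (⊤ : ℕ∞) g → ContDiff ℝ (⊤ : ℕ∞) (op i g))
    {g : (Fin n → ℝ) × (Fin n → ℝ) → ℂ} (hg : ContDiff ℝ (⊤ : ℕ∞) g) (L : List (Fin n)) :
    ContDiff ℝ (⊤ : ℕ∞) (L.foldr op g) := by
  induction L with
  | nil => exact hg
  | cons i L ih => exact hop i _ ih

lemma contDiff_diffR {n : ℕ} (i : Fin n) {g : (Fin n → ℝ) × (Fin n → ℝ) → ℂ}
    (hg : ContDiff ℝ (⊤ : ℕ∞) g) : ContDiff ℝ (⊤ : ℕ∞) (diffR i g) :=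
  (hg.comp (contDiff_id.add contDiff_const)).sub hg

lemma diffR_comm {n : ℕ} (i j : Fin n) (g : (Fin n → ℝ) × (Fin n → ℝ) → ℂ) :
    diffR i (diffR j g) = diffR j (diffR i g) := by
  funext p
  simp only [diffR, add_right_comm p (0, Pi.single i 1) (0, Pi.single j 1)]
  ring

lemma pdXi_diffR {n : ℕ} (i j : Fin n) {g : (Fin n → ℝ) × (Fin n → ℝ) → ℂ}
    (hg : ContDiff ℝ (⊤ : ℕ∞) g) : pdXi i (diffR j g) = diffR j (pdXi i g) := by
  have hd : Differentiable ℝ g := hg.differentiable (by simp)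
  rw [pdXi_eq i ((contDiff_diffR j hg).differentiable (by simp)), pdXi_eq i hd]
  funext p
  have h1 : DifferentiableAt ℝ (fun p => g (p + (0, Pi.single j 1))) p :=
    (hd _).comp p (differentiableAt_id.add_const _)
  have h2 : fderiv ℝ (diffR j g) p =
      fderiv ℝ g (p + (0, Pi.single j 1)) - fderiv ℝ g p := by
    unfold diffR
    rw [fderiv_fun_sub h1 (hd p), fderiv_comp_add_right]
  simp only [h2, diffR, sub_apply]

lemma foldr_diffR_comm {n : ℕ} (j : Fin n) (L : List (Fin n))
    (g : (Fin n → ℝ) × (Fin n → ℝ) → ℂ) :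
    L.foldr diffR (diffR j g) = diffR j (L.foldr diffR g) := by
  induction L with
  | nil => rfl
  | cons i L ih => rw [List.foldr_cons, ih, diffR_comm, List.foldr_cons]

lemma foldr_pdXi_diffR {n : ℕ} (j : Fin n) (L : List (Fin n))
    {g : (Fin n → ℝ) × (Fin n → ℝ) → ℂ} (hg : ContDiff ℝ (⊤ : ℕ∞) g) :
    L.foldr pdXi (diffR j g) = diffR j (L.foldr pdXi g) := by
  induction L with
  | nil => rfl
  | cons i L ih =>
    rw [List.foldr_cons, ih, pdXi_diffR i j (contDiff_foldr (fun i _ => contDiff_pdXi i) hg L),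
      List.foldr_cons]

/-! ### Differences bounded by derivatives -/

lemma add_single_eq_update {n : ℕ} {R : Type*} [AddMonoid R] (v : Fin n → R) (i : Fin n) (c : R) :
    v + Pi.single i c = Function.update v i (v i + c) := by
  funext k
  by_cases h : k = i
  · subst h; simp
  · simp [h]

/-- Mean value inequality along one unit step in the direction `ξ_i`. -/
lemma norm_diffR_le {n : ℕ} (i : Fin n) {g : (Fin n → ℝ) × (Fin n → ℝ) → ℂ}
    (hg : ContDiff ℝ (⊤ : ℕ∞) g) (p : (Fin n → ℝ) × (Fin n → ℝ)) {B : ℝ}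
    (hB : ∀ t ∈ Set.Icc (p.2 i) (p.2 i + 1), ‖pdXi i g (p.1, Function.update p.2 i t)‖ ≤ B) :
    ‖diffR i g p‖ ≤ B := by
  have hd : Differentiable ℝ g := hg.differentiable (by simp)
  have h := norm_image_sub_le_of_norm_deriv_le_segment' (a := p.2 i) (b := p.2 i + 1) (C := B)
    (fun t _ => (hasDerivAt_xi i hd p t).hasDerivWithinAt)
    (fun t ht => by simpa [pdXi_eq i hd] using hB t ⟨ht.1, ht.2.le⟩)
    (p.2 i + 1) (Set.right_mem_Icc.2 (by linarith))
  have e : p + (0, Pi.single i 1) = (p.1, Function.update p.2 i (p.2 i + 1)) := by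
    rw [← add_single_eq_update]
    ext <;> simp
  simpa [diffR, e] using h

/-- An iterated difference at `p` is bounded by any bound for the corresponding iterated derivative
on the cube of side `L.length` in the `ξ`-variable with lowest corner `p`. -/
lemma norm_foldr_diffR_le {n : ℕ} (L : List (Fin n)) {g : (Fin n → ℝ) × (Fin n → ℝ) → ℂ}
    (hg : ContDiff ℝ (⊤ : ℕ∞) g) (p : (Fin n → ℝ) × (Fin n → ℝ)) {B : ℝ}
    (hB : ∀ y : Fin n → ℝ, (∀ k, p.2 k ≤ y k ∧ y k ≤ p.2 k + L.length) →
      ‖L.foldr pdXi g (p.1, y)‖ ≤ B) :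
    ‖L.foldr diffR g p‖ ≤ B := by
  induction L generalizing g with
  | nil => exact hB p.2 (by simp)
  | cons i L ih =>
    -- The outermost difference goes onto `g`, so that it can be estimated after the derivatives.
    rw [List.foldr_cons, ← foldr_diffR_comm]
    refine ih (contDiff_diffR i hg) fun y hy => ?_
    rw [foldr_pdXi_diffR i L hg]
    refine norm_diffR_le i (contDiff_foldr (fun i _ => contDiff_pdXi i) hg L) _ fun t ht => ?_
    refine hB _ fun k => ?_
    obtain ⟨h1, h2⟩ := hy k
    obtain ⟨h3, h4⟩ := ht
    push_cast [List.length_cons]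
    by_cases hk : k = i
    · subst hk
      simp only [Function.update_self]
      constructor <;> linarith
    · simp only [Function.update_of_ne hk]
      constructor <;> linarith

/-- On lattice points the real differences are the discrete ones. -/
lemma foldr_diffOp_eq {n : ℕ} (L : List (Fin n)) (g : (Fin n → ℝ) × (Fin n → ℝ) → ℂ)
    (x : Fin n → ℝ) (ξ : Fin n → ℤ) :
    L.foldr diffOp (fun ζ : Fin n → ℤ => g (x, fun i => (ζ i : ℝ))) ξ =
      L.foldr diffR g (x, fun i => (ξ i : ℝ)) := by
  induction L generalizing ξ with
  | nil => rfl
  | cons i L ih =>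
    have e : ((x, fun k => (ξ k : ℝ)) : (Fin n → ℝ) × (Fin n → ℝ)) + (0, Pi.single i 1) =
        (x, fun k => ((Function.update ξ i (ξ i + 1) k : ℤ) : ℝ)) := by
      ext k
      · simp
      · by_cases hk : k = i
        · subst hk; simp
        · simp [hk]
    simp only [List.foldr_cons, diffOp, diffR, ih, e]

/-! ### Comparison of weights -/

/-- The triangle inequality for the weight `⟨ξ⟩ = 1 + |ξ|`, in multiplicative form. -/
lemma one_add_norm_le {n : ℕ} (N : ℕ) (u v : Fin n → ℝ) (h : ∀ k, |u k - v k| ≤ N) :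
    1 + Real.sqrt (∑ i, u i ^ 2) ≤
      (1 + Real.sqrt (n * (N : ℝ) ^ 2)) * (1 + Real.sqrt (∑ i, v i ^ 2)) := by
  have e : ∀ w : Fin n → ℝ, Real.sqrt (∑ i, w i ^ 2) = ‖WithLp.toLp 2 w‖ := by
    intro w
    simp [EuclideanSpace.norm_eq]
  have h1 : Real.sqrt (∑ i, (u - v) i ^ 2) ≤ Real.sqrt (n * (N : ℝ) ^ 2) := by
    apply Real.sqrt_le_sqrt
    calc ∑ i, (u - v) i ^ 2 ≤ ∑ _i : Fin n, (N : ℝ) ^ 2 :=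
          Finset.sum_le_sum fun i _ => sq_le_sq' (abs_le.1 (h i)).1 (abs_le.1 (h i)).2
      _ = n * (N : ℝ) ^ 2 := by simp
  have h2 : Real.sqrt (∑ i, u i ^ 2) ≤
      Real.sqrt (∑ i, (u - v) i ^ 2) + Real.sqrt (∑ i, v i ^ 2) := by
    rw [e, e, e]
    calc ‖WithLp.toLp 2 u‖ = ‖WithLp.toLp 2 (u - v) + WithLp.toLp 2 v‖ := by
          rw [← WithLp.toLp_add, sub_add_cancel]
      _ ≤ _ := norm_add_le _ _
  nlinarith [mul_nonneg (Real.sqrt_nonneg (n * (N : ℝ) ^ 2)) (Real.sqrt_nonneg (∑ i, v i ^ 2))]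

/-- Peetre's inequality: weights at a bounded distance are comparable, to any real power. -/
lemma weight_le {n : ℕ} (N : ℕ) (s : ℝ) (u v : Fin n → ℝ) (h : ∀ k, |u k - v k| ≤ N) :
    (1 + Real.sqrt (∑ i, u i ^ 2)) ^ s ≤
      (1 + Real.sqrt (n * (N : ℝ) ^ 2)) ^ |s| * (1 + Real.sqrt (∑ i, v i ^ 2)) ^ s := by
  have h1 := one_add_norm_le N u v h
  have h2 := one_add_norm_le N v u fun k => by rw [abs_sub_comm]; exact h k
  have hK : 0 < 1 + Real.sqrt (n * (N : ℝ) ^ 2) := by positivity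
  have hu : 0 < 1 + Real.sqrt (∑ i, u i ^ 2) := by positivity
  have hv : 0 < 1 + Real.sqrt (∑ i, v i ^ 2) := by positivity
  rcases le_total 0 s with hs | hs
  · rw [abs_of_nonneg hs, ← Real.mul_rpow hK.le hv.le]
    exact Real.rpow_le_rpow hu.le h1 hs
  · -- For `s ≤ 0` the two points exchange roles.
    have h3 := Real.rpow_le_rpow_of_nonpos hv h2 hs
    rw [Real.mul_rpow hK.le hu.le] at h3
    calc (1 + Real.sqrt (∑ i, u i ^ 2)) ^ s
        = (1 + Real.sqrt (n * (N : ℝ) ^ 2)) ^ |s| *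
          ((1 + Real.sqrt (n * (N : ℝ) ^ 2)) ^ s * (1 + Real.sqrt (∑ i, u i ^ 2)) ^ s) := by
          rw [← mul_assoc, ← Real.rpow_add hK, abs_of_nonpos hs, neg_add_cancel, Real.rpow_zero,
            one_mul]
      _ ≤ _ := mul_le_mul_of_nonneg_left h3 (by positivity)


/-! ### Difference estimates for the restricted symbol -/

/-- If a smooth symbol `a(x,ξ)` on `ℝⁿ × ℝⁿ`, `ℤⁿ`-periodic in `x`, satisfies the
`(ρ,δ)`-estimates `|∂_ξ^α ∂_x^β a(x,ξ)| ≤ C_{α,β} ⟨ξ⟩^{m₀ - ρ|α| + δ|β|}` for `|α| ≤ N₁`,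
`|β| ≤ N₂`, then its restriction to `ℝⁿ × ℤⁿ` satisfies the corresponding difference
estimates `|Δ_ξ^α ∂_x^β a(x,ξ)| ≤ C'_{α,β} ⟨ξ⟩^{m₀ - ρ|α| + δ|β|}` for `|α| ≤ N₁`,
`|β| ≤ N₂`. -/
theorem restriction_symbol_estimates (n : ℕ) (hn : 1 ≤ n)
    (δ ρ m₀ : ℝ) (hδ0 : 0 ≤ δ) (hδ1 : δ ≤ 1) (hρ0 : 0 ≤ ρ) (hρ1 : ρ < 1)
    (N₁ N₂ : ℕ)
    (a : (Fin n → ℝ) × (Fin n → ℝ) → ℂ) (ha : ContDiff ℝ (⊤ : ℕ∞) a)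
    (haper : ∀ (x ξ : Fin n → ℝ) (j : Fin n → ℤ), a (x + (fun i => (j i : ℝ)), ξ) = a (x, ξ))
    (hsym : ∀ α β : Fin n → ℕ, (∑ i, α i) ≤ N₁ → (∑ i, β i) ≤ N₂ →
      ∃ C : ℝ, ∀ (x ξ : Fin n → ℝ),
        ‖multiOp pdXi α (multiOp pdX β a) (x, ξ)‖ ≤
          C * (1 + Real.sqrt (∑ i, ξ i ^ 2)) ^
            (m₀ - ρ * (∑ i, α i : ℕ) + δ * (∑ i, β i : ℕ))) :
    ∀ α β : Fin n → ℕ, (∑ i, α i) ≤ N₁ → (∑ i, β i) ≤ N₂ →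
      ∃ C' : ℝ, ∀ (x : Fin n → ℝ) (ξ : Fin n → ℤ),
        ‖multiOp diffOp α
            (fun ζ : Fin n → ℤ => multiOp pdX β a (x, fun i => (ζ i : ℝ))) ξ‖ ≤
          C' * (1 + Real.sqrt (∑ i, ((ξ i : ℝ)) ^ 2)) ^
            (m₀ - ρ * (∑ i, α i : ℕ) + δ * (∑ i, β i : ℕ)) := by
  intro α β hα hβ
  obtain ⟨C, hC⟩ := hsym α β hα hβ
  set s : ℝ := m₀ - ρ * (∑ i, α i : ℕ) + δ * (∑ i, β i : ℕ)
  set N : ℕ := ∑ i, α i with hN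
  refine ⟨|C| * (1 + Real.sqrt (n * (N : ℝ) ^ 2)) ^ |s|, fun x ξ => ?_⟩
  have hg : ContDiff ℝ (⊤ : ℕ∞) (multiOp pdX β a) := by
    rw [multiOp_eq_foldr]
    exact contDiff_foldr (fun i _ => contDiff_pdX i) ha _
  rw [multiOp_eq_foldr, foldr_diffOp_eq]
  refine norm_foldr_diffR_le _ hg _ fun y hy => ?_
  rw [← multiOp_eq_foldr]
  have hw := weight_le N s y (fun i => (ξ i : ℝ)) fun k => by
    have hk := hy k
    rw [length_indexWord, ← hN] at hk
    have hk1 := hk.1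
    have hk2 := hk.2
    simp only at hk1 hk2
    rw [abs_le]
    constructor <;> linarith [Nat.cast_nonneg (α := ℝ) N]
  calc _ ≤ C * (1 + Real.sqrt (∑ i, y i ^ 2)) ^ s := hC x y
    _ ≤ |C| * (1 + Real.sqrt (∑ i, y i ^ 2)) ^ s :=
        mul_le_mul_of_nonneg_right (le_abs_self C) (by positivity)
    _ ≤ |C| * ((1 + Real.sqrt (n * (N : ℝ) ^ 2)) ^ |s| *
          (1 + Real.sqrt (∑ i, (ξ i : ℝ) ^ 2)) ^ s) :=
        mul_le_mul_of_nonneg_left hw (abs_nonneg C)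
    _ = _ := by ring
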